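/- There exists a class of languages that is behaviorally correctly learnable from informants by a full-information learner but not by any finitely cautious one: [Inf G Bc] \ [Inf G Caut_Fin Bc] ≠ ∅; in fact the class consisting of ℕ together with all finite subsets of ℕ witnesses this separation. -/

import Mathlib

open Filter Classical

namespace InfBc

/-! ### Basic notions: r.e. sets, informants, learners -/

/-- The `e`-th recursively enumerable set (via an acceptable numbering of
partial computable functions, `W e = dom φ_e`). -/
def W (e : ℕ) : Set ℕ := {x | ((Denumerable.ofNat Nat.Partrec.Code e).eval x).Dom}

/-- A language is recursively enumerable. -/
def RE (L : Set ℕ) : Prop := ∃ e, W e = L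

abbrev Datum := ℕ × Bool
abbrev Seq := List Datum
abbrev Informant := ℕ → Datum
abbrev HypSeq := ℕ → Part ℕ
/-- Learners are partial functions; all input types are coded into `ℕ`. -/
abbrev Learner := ℕ →. ℕ
abbrev Restriction := HypSeq → Informant → Prop

/-- Positive information of an infinite sequence. -/
def posI (I : Informant) : Set ℕ := {x | ∃ n, I n = (x, true)}
/-- Negative information of an infinite sequence. -/
def negI (I : Informant) : Set ℕ := {x | ∃ n, I n = (x, false)}

/-- `I` is an informant for the language `L`. -/
def IsInformant (I : Informant) (L : Set ℕ) : Prop := posI I = L ∧ negI I = Lᶜ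

/-- `I` is an informant (for some language), i.e. `I ∈ Inf`. -/
def IsInf (I : Informant) : Prop := IsInformant I (posI I)

/-- `I` is a canonical informant. -/
def Canonical (I : Informant) : Prop := ∀ x, I x = (x, true) ∨ I x = (x, false)

/-- `I[n]`, the length-`n` initial segment of `I`. -/
def segment (I : Informant) (n : ℕ) : Seq := (List.range n).map I

/-- Positive information of a finite sequence. -/
def posS (σ : Seq) : Set ℕ := {x | (x, true) ∈ σ}
/-- Negative information of a finite sequence. -/
def negS (σ : Seq) : Set ℕ := {x | (x, false) ∈ σ}
/-- The content of a finite sequence, as a set. -/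
def contentS (σ : Seq) : Set Datum := {a | a ∈ σ}

/-! ### Interaction operators -/

abbrev InteractionOperator := Learner → Informant → HypSeq

/-- Full-information (Gold-style) interaction: `G(h,I)(i) = h(I[i])`. -/
def Gop : InteractionOperator := fun h I i => h (Encodable.encode (segment I i))

/-- Set-driven interaction: `Sd(h,I)(i) = h(content(I[i]))`. -/
def Sdop : InteractionOperator := fun h I i => h (Encodable.encode (segment I i).toFinset)

/-- The iterated evaluation of an iterative learner on a finite sequence:
start with the initial hypothesis `h(none)` and feed the data one by one. -/
def iterExtend (h : Learner) (σ : Seq) : Part ℕ :=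
  σ.foldl (fun pe a => pe.bind fun e => h (Encodable.encode (some (e, a))))
    (h (Encodable.encode (none : Option (ℕ × Datum))))

/-- Iterative interaction: `It(h,I)(i)` is obtained by feeding `I[i]` one datum
at a time, each time updating the previous hypothesis. -/
def Itop : InteractionOperator := fun h I i => iterExtend h (segment I i)

/-- An iterative learner is confluent if the order and multiplicity in which
the content is presented does not matter. -/
def ConfluentLearner (h : Learner) : Prop :=
  ∀ σ τ : Seq, contentS σ = contentS τ → iterExtend h σ = iterExtend h τ

/-- Confluently iterative interaction. -/
noncomputable def CflItop : InteractionOperator := fun h I i =>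
  if ConfluentLearner h then iterExtend h (segment I i) else Part.none

/-- `β ≼ β'`: every (partial computable) `β`-learner can be translated into a
`β'`-learner with the same hypothesis sequence on every informant. -/
def OpLe (β β' : InteractionOperator) : Prop :=
  ∀ h : Learner, Partrec h → ∃ h' : Learner, Partrec h' ∧
    ∀ I : Informant, IsInf I → ∀ n, β h I n = β' h' I n

/-! ### Learning restrictions -/

/-- The trivial restriction `T`. -/
def TT : Restriction := fun _ _ => True

/-- Explanatory identification. -/
def Ex : Restriction := fun p I =>
  ∃ q, W q = posI I ∧ ∀ᶠ n in atTop, p n = Part.some q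

/-- Behaviorally correct identification. -/
def Bc : Restriction := fun p I => ∀ᶠ n in atTop, ∃ e ∈ p n, W e = posI I

/-- Consistency of a hypothesis with a finite sequence of data. -/
def ConsH (e : ℕ) (σ : Seq) : Prop := posS σ ⊆ W e ∧ negS σ ∩ W e = ∅

/-- Consistency of a hypothesis sequence with an informant. -/
def Cons : Restriction := fun p I => ∀ n, ∃ e ∈ p n, ConsH e (segment I n)

/-- Strongly monotone. -/
def SMon : Restriction := fun p _ =>
  ∀ s t, s ≤ t → ∀ e ∈ p s, ∀ e' ∈ p t, W e ⊆ W e'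

/-- Dual strongly monotone. -/
def SMond : Restriction := fun p _ =>
  ∀ s t, s ≤ t → ∀ e ∈ p s, ∀ e' ∈ p t, W e' ⊆ W e

/-- Monotone. -/
def Mon : Restriction := fun p I =>
  ∀ s t, s ≤ t → ∀ e ∈ p s, ∀ e' ∈ p t, W e ∩ posI I ⊆ W e' ∩ posI I

/-- Dual monotone. -/
def Mond : Restriction := fun p I =>
  ∀ s t, s ≤ t → ∀ e ∈ p s, ∀ e' ∈ p t, (W e)ᶜ ∩ negI I ⊆ (W e')ᶜ ∩ negI I

/-- Weakly monotone. -/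
def WMon : Restriction := fun p I =>
  ∀ s t, s ≤ t → ∀ e ∈ p s, ConsH e (segment I t) → ∀ e' ∈ p t, W e ⊆ W e'

/-- Dual weakly monotone. -/
def WMond : Restriction := fun p I =>
  ∀ s t, s ≤ t → ∀ e ∈ p s, ConsH e (segment I t) → ∀ e' ∈ p t, W e' ⊆ W e

/-- Cautious. -/
def Caut : Restriction := fun p _ =>
  ∀ s t, s < t → ∀ e ∈ p s, ∀ e' ∈ p t, ¬ W e' ⊂ W e

/-- Target cautious. -/
def CautTar : Restriction := fun p I =>
  ∀ s, ∀ e ∈ p s, ¬ posI I ⊂ W e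

/-- Finitely cautious. -/
def CautFin : Restriction := fun p _ =>
  ∀ s t, s < t → ∀ e ∈ p s, ∀ e' ∈ p t, W e' ⊂ W e → (W e').Infinite

/-- Infinitely cautious. -/
def CautInf : Restriction := fun p _ =>
  ∀ s t, s < t → ∀ e ∈ p s, ∀ e' ∈ p t, W e' ⊂ W e → (W e').Finite

/-! ### Learnability -/

/-- The class of admissible learners: all partial computable learners. -/
def AllL : Learner → Prop := fun _ => True
/-- The class of admissible learners: total computable learners (`ℛ`). -/
def TotalL : Learner → Prop := fun h => ∀ x, (h x).Dom
/-- Admissible informants: all informants (`Inf`). -/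
def AllI : Informant → Prop := fun _ => True

/-- `h` learns `L` in the setting given by admissible informants `P`,
interaction operator `β` and local restriction `δ`. -/
def LearnsWith (P : Informant → Prop) (β : InteractionOperator) (δ : Restriction)
    (h : Learner) (L : Set ℕ) : Prop :=
  RE L ∧ ∀ I : Informant, P I → IsInformant I L → δ (β h I) I

/-- `[τ(α) C P β δ]`: the collection of all classes of languages learnable by
some learner in `C` that satisfies the global restriction `α` on all admissible
informants, under interaction operator `β` and local restriction `δ`. -/
def Learnable (α : Restriction) (C : Learner → Prop) (P : Informant → Prop)
    (β : InteractionOperator) (δ : Restriction) : Set (Set (Set ℕ)) :=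
  {𝓛 | ∃ h : Learner, Partrec h ∧ C h ∧
        (∀ I : Informant, IsInf I → P I → α (β h I) I) ∧
        ∀ L ∈ 𝓛, LearnsWith P β δ h L}

/-! ### Properties of restrictions -/

/-- A learning restriction is delayable if it is preserved under postponing
hypotheses along a non-decreasing unbounded function. -/
def Delayable (δ : Restriction) : Prop :=
  ∀ I I' : Informant, IsInf I → IsInf I' → Set.range I = Set.range I' →
    ∀ (p : HypSeq) (s : ℕ → ℕ), Monotone s → (∀ m, ∃ n, m ≤ s n) →
      δ p I → (∀ n, contentS (segment I (s n)) ⊆ contentS (segment I' n)) →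
      δ (fun n => p (s n)) I'

/-- A learning restriction is semantic if it is indifferent to replacing the
hypothesis sequence by a semantically equivalent one. -/
def Semantic (δ : Restriction) : Prop :=
  ∀ (p p' : HypSeq) (I : Informant), δ p I →
    (∀ i, (p i).Dom ↔ (p' i).Dom) →
    (∀ i, ∀ e ∈ p i, ∀ e' ∈ p' i, W e = W e') →
    δ p' I


/-- The canonical informant of a language. -/
noncomputable def canon (L : Set ℕ) : Informant := fun x => (x, decide (x ∈ L))

theorem canon_informant (L : Set ℕ) : IsInformant (canon L) L := by
  constructor
  · ext x
    simp only [posI, canon, Set.mem_ofPred_eq, Prod.mk.injEq, decide_eq_true_eq]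
    constructor
    · rintro ⟨n, rfl, h⟩
      exact h
    · intro h
      exact ⟨x, rfl, h⟩
  · ext x
    simp only [negI, canon, Set.mem_ofPred_eq, Prod.mk.injEq, decide_eq_false_iff_not,
      Set.mem_compl_iff]
    constructor
    · rintro ⟨n, rfl, h⟩
      exact h
    · intro h
      exact ⟨x, rfl, h⟩

/-- Acceptance condition of the learner: either no negative datum, or `x` is positive. -/
def Acc (σ : Seq) (x : ℕ) : Prop := (∀ a ∈ σ, a.2 = true) ∨ (∃ a ∈ σ, a = (x, true))

theorem acc_primrec : PrimrecPred fun p : Seq × ℕ => Acc p.1 p.2 := by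
  unfold Acc
  apply PrimrecPred.or
  · have h : PrimrecPred fun a : Datum => a.2 = true :=
      Primrec.eq.comp Primrec.snd (Primrec.const true)
    exact (PrimrecPred.forall_mem_list h).comp Primrec.fst
  · have h : PrimrecRel fun (a : Datum) (x : ℕ) => a = (x, true) :=
      Primrec.eq.comp Primrec.fst (Primrec.pair Primrec.snd (Primrec.const true))
    exact (PrimrecRel.exists_mem_list h).comp Primrec.fst Primrec.snd

/-- A computable function producing hypotheses for the learner. -/
theorem exists_hyp : ∃ g : ℕ → ℕ, Computable g ∧
    ∀ σ : Seq, W (g (Encodable.encode σ)) = {x | Acc σ x} := by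
  obtain ⟨d, hd⟩ := acc_primrec
  have hb : Primrec fun n : ℕ =>
      ((Encodable.decode (α := Seq × ℕ) n).getD ([], 0)) :=
    Primrec.option_getD.comp Primrec.decode (Primrec.const _)
  have hr : REPred fun n : ℕ =>
      Acc ((Encodable.decode (α := Seq × ℕ) n).getD ([], 0)).1
        ((Encodable.decode (α := Seq × ℕ) n).getD ([], 0)).2 :=
    ComputablePred.to_re ⟨_, (hd.comp hb).to_comp⟩
  have hr2 := hr.map ((Computable.const 0).to₂ (β := Unit))
  obtain ⟨c, hc⟩ := Nat.Partrec.Code.exists_code.1 (Partrec.nat_iff.1 hr2)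
  refine ⟨fun n => Encodable.encode (Nat.Partrec.Code.curry c n), ?_, ?_⟩
  · exact (Primrec.encode.comp
      (Nat.Partrec.Code.primrec₂_curry.comp (Primrec.const c) Primrec.id)).to_comp
  · intro σ
    ext x
    have hp : Nat.pair (Encodable.encode σ) x = Encodable.encode (σ, x) := rfl
    simp only [W, Set.mem_ofPred_eq, Denumerable.ofNat_encode, Nat.Partrec.Code.eval_curry, hc, hp]
    simp [Part.assert]

theorem mem_segment {I : Informant} {n : ℕ} {a : Datum} :
    a ∈ segment I n ↔ ∃ m < n, I m = a := by
  simp [segment]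

theorem re_of_finite {L : Set ℕ} (g : ℕ → ℕ)
    (hg : ∀ σ : Seq, W (g (Encodable.encode σ)) = {x | Acc σ x}) (hL : L.Finite) : RE L := by
  refine ⟨_, (hg ((0, false) :: hL.toFinset.toList.map fun x => (x, true))).trans ?_⟩
  ext x
  simp [Acc]

theorem learn_part :
    insert Set.univ {L : Set ℕ | L.Finite} ∈ Learnable TT AllL AllI Gop Bc := by
  obtain ⟨g, hgc, hg⟩ := exists_hyp
  refine ⟨fun n => Part.some (g n), hgc.partrec, trivial, fun _ _ _ => trivial, ?_⟩
  have key : ∀ L I, IsInformant I L → (∀ᶠ n in atTop, {x | Acc (segment I n) x} = L) →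
      Bc (Gop (fun n => Part.some (g n)) I) I := by
    intro L I hI h
    filter_upwards [h] with n hn
    refine ⟨_, Part.mem_some _, ?_⟩
    rw [hg, hn, hI.1]
  rintro L (rfl | hL)
  · refine ⟨⟨_, (hg []).trans ?_⟩, fun I _ hI => key _ I hI (Eventually.of_forall fun n => ?_)⟩
    · ext x
      simp [Acc]
    · ext x
      simp only [Set.mem_ofPred_eq, Set.mem_univ, iff_true]
      left
      rintro ⟨y, b⟩ hm
      obtain ⟨m, -, hm⟩ := mem_segment.1 hm
      cases b with
      | true => rfl
      | false =>
        have : y ∈ negI I := ⟨m, hm⟩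
        rw [hI.2] at this
        simp at this
  · refine ⟨re_of_finite g hg hL, fun I _ hI => key _ I hI ?_⟩
    have hL' : L.Finite := hL
    obtain ⟨y, hy⟩ := hL'.infinite_compl.nonempty
    rw [← hI.2] at hy
    obtain ⟨k, hk⟩ := hy
    have hall : ∀ᶠ n in atTop, ∀ x ∈ L, (x, true) ∈ segment I n := by
      rw [eventually_all_finite hL']
      intro x hx
      rw [← hI.1] at hx
      obtain ⟨m, hm⟩ := hx
      filter_upwards [eventually_gt_atTop m] with n hn
      exact mem_segment.2 ⟨m, hn, hm⟩
    filter_upwards [hall, eventually_gt_atTop k] with n hn hkn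
    ext x
    constructor
    · rintro (h | ⟨a, ha, rfl⟩)
      · have := h _ (mem_segment.2 ⟨k, hkn, hk⟩)
        simp at this
      · obtain ⟨m, -, hm⟩ := mem_segment.1 ha
        rw [← hI.1]
        exact ⟨m, hm⟩
    · intro hx
      exact Or.inr ⟨_, hn x hx, rfl⟩

theorem not_learn_part :
    insert Set.univ {L : Set ℕ | L.Finite} ∉
      Learnable TT AllL AllI Gop (fun p I => CautFin p I ∧ Bc p I) := by
  rintro ⟨h, -, -, -, hl⟩
  obtain ⟨-, hU⟩ := hl Set.univ (Or.inl rfl)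
  obtain ⟨-, hB⟩ := hU _ trivial (canon_informant _)
  obtain ⟨n, e, he, hWe⟩ := hB.exists
  rw [(canon_informant _).1] at hWe
  obtain ⟨-, hF⟩ := hl (Set.Iio n) (Or.inr (Set.finite_Iio n))
  obtain ⟨hC, hB'⟩ := hF _ trivial (canon_informant _)
  obtain ⟨t, ⟨e', he', hWe'⟩, hnt⟩ := (hB'.and (eventually_gt_atTop n)).exists
  rw [(canon_informant _).1] at hWe'
  have hseg : segment (canon Set.univ) n = segment (canon (Set.Iio n)) n := by
    unfold segment
    apply List.map_congr_left
    intro x hx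
    have hx' : x < n := by simpa using hx
    simp [canon, hx']
  have he2 : e ∈ Gop h (canon (Set.Iio n)) n := by
    unfold Gop at he ⊢
    rw [← hseg]
    exact he
  have hinf := hC n t hnt e he2 e' he' (by
    rw [hWe, hWe', Set.ssubset_univ_iff]
    intro hh
    have : n ∈ Set.Iio n := hh ▸ Set.mem_univ n
    simp at this)
  rw [hWe'] at hinf
  exact hinf (Set.finite_Iio n)

/-- The class consisting of `ℕ` together with all finite
languages is in `[Inf G Bc]` but not in `[Inf G Caut_Fin Bc]`; in particular
`[Inf G Bc] \ [Inf G Caut_Fin Bc] ≠ ∅`. -/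
theorem cautFin_proper :
    insert Set.univ {L : Set ℕ | L.Finite} ∈ Learnable TT AllL AllI Gop Bc ∧
    insert Set.univ {L : Set ℕ | L.Finite} ∉
      Learnable TT AllL AllI Gop (fun p I => CautFin p I ∧ Bc p I) :=
  ⟨learn_part, not_learn_part⟩

end InfBc
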